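/- In the CumLog dynamics with finite initial valuation s^0 ∈ ℝ^K, for every p* ∈ P* and every t ≥ 0, D(p*, p^{t+1}) ≤ D(p*, p^t) − (1/2) · ‖p^t − p^{t+1}‖₂² + r η^t · ⟨c(p^t), p* − p^{t+1}⟩. -/

import Mathlib

open Finset Filter Topology

/-!
For fixed `a`, the increment of `D(a, ·)` along a step is governed by the three-point identity
`D(a, y) = D(a, x) - D(y, x) + ⟨log x - log y, a - y⟩`. Under the logit map, adding `η c` to the
valuation changes `log p` by `-r η c` up to a term that depends only on the OD pair, and such a term
is orthogonal to `a - y`, because both strategies carry unit mass on every OD pair. This produces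
the linear term; the quadratic one comes from `‖x - y‖² / 2 ≤ D(y, x)`, that is, from the
1-strong convexity of `x log x` on `[0, 1]`.
-/

theorem add_mul_sub_add_sq_le_of_strongConvexOn {S : Set ℝ} {f : ℝ → ℝ} {m f' x y : ℝ}
    (hf : StrongConvexOn S m f) (hx : x ∈ S) (hy : y ∈ S) (hf' : HasDerivAt f f' x) :
    f x + f' * (y - x) + m / 2 * (y - x) ^ 2 ≤ f y := by
  have hconv := strongConvexOn_iff_convex.1 hf
  simp only [Real.norm_eq_abs, sq_abs] at hconv
  have hderiv : HasDerivAt (fun z ↦ f z - m / 2 * z ^ 2) (f' - m * x) x := by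
    refine (hf'.sub ((hasDerivAt_pow 2 x).const_mul (m / 2))).congr_deriv ?_
    push_cast
    ring
  rcases lt_trichotomy x y with hxy | rfl | hyx
  · have hslope := hconv.le_slope_of_hasDerivAt hx hy hxy hderiv
    rw [slope_def_field, le_div_iff₀ (sub_pos.2 hxy)] at hslope
    linarith
  · simp
  · have hslope := hconv.slope_le_of_hasDerivAt hy hx hyx hderiv
    rw [slope_def_field, div_le_iff₀ (sub_pos.2 hyx)] at hslope
    linarith

theorem strongConvexOn_mul_log (M : ℝ) :
    StrongConvexOn (Set.Icc 0 M) M⁻¹ (fun x ↦ x * Real.log x) := by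
  refine strongConvexOn_iff_convex.2 ?_
  simp only [Real.norm_eq_abs, sq_abs]
  refine convexOn_of_hasDerivWithinAt2_nonneg (convex_Icc 0 M)
    (f' := fun x ↦ Real.log x + 1 - M⁻¹ * x) (f'' := fun x ↦ x⁻¹ - M⁻¹) ?_ ?_ ?_ ?_
  · exact (Real.continuous_mul_log.sub (by fun_prop)).continuousOn
  all_goals
    intro x hx
    rw [interior_Icc] at hx
    have hx0 : x ≠ 0 := hx.1.ne'
  · refine HasDerivAt.hasDerivWithinAt (((Real.hasDerivAt_mul_log hx0).sub
      ((hasDerivAt_pow 2 x).const_mul (M⁻¹ / 2))).congr_deriv ?_)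
    push_cast
    ring
  · refine HasDerivAt.hasDerivWithinAt ((((Real.hasDerivAt_log hx0).add_const 1).sub
      ((hasDerivAt_id x).const_mul M⁻¹)).congr_deriv ?_)
    ring
  · exact sub_nonneg.2 (inv_anti₀ hx.1 hx.2.le)

theorem sq_sub_div_le_mul_log_sub_log {M x y : ℝ} (hx : x ∈ Set.Icc 0 M) (hy : y ∈ Set.Ioc 0 M) :
    (x - y) ^ 2 / (2 * M) ≤ x * (Real.log x - Real.log y) - x + y := by
  have htangent := add_mul_sub_add_sq_le_of_strongConvexOn (strongConvexOn_mul_log M)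
    (Set.Ioc_subset_Icc_self hy) hx (Real.hasDerivAt_mul_log hy.1.ne')
  have hquot : (x - y) ^ 2 / (2 * M) = M⁻¹ / 2 * (x - y) ^ 2 := by ring
  linarith

section KullbackLeibler

variable {K : Type*} [Fintype K]

/-- The Kullback–Leibler divergence `D(a, b)` of two vectors indexed by a finite type. The
convention `0 · log 0 = 0` holds since `Real.log 0` is a real number. The entries of a vector need
not sum to one: in the routing game they sum to the number of OD pairs. -/
noncomputable def discreteKL (a b : K → ℝ) : ℝ :=
  ∑ k, a k * (Real.log (a k) - Real.log (b k))

theorem discreteKL_three_point (a x y : K → ℝ) :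
    discreteKL a y = discreteKL a x - discreteKL y x
      + ∑ k, (Real.log (x k) - Real.log (y k)) * (a k - y k) := by
  simp only [discreteKL, ← sum_sub_distrib, ← sum_add_distrib]
  exact sum_congr rfl fun k _ ↦ by ring

theorem sum_sq_sub_div_le_discreteKL {M : ℝ} {a b : K → ℝ} (ha : ∀ k, a k ∈ Set.Icc 0 M)
    (hb : ∀ k, b k ∈ Set.Ioc 0 M) (hab : ∑ k, b k ≤ ∑ k, a k) :
    (∑ k, (a k - b k) ^ 2) / (2 * M) ≤ discreteKL a b := by
  calc (∑ k, (a k - b k) ^ 2) / (2 * M)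
      = ∑ k, (a k - b k) ^ 2 / (2 * M) := sum_div _ _ _
    _ ≤ ∑ k, (a k * (Real.log (a k) - Real.log (b k)) - a k + b k) :=
        sum_le_sum fun k _ ↦ sq_sub_div_le_mul_log_sub_log (ha k) (hb k)
    _ = discreteKL a b - ∑ k, a k + ∑ k, b k := by
        rw [sum_add_distrib, sum_sub_distrib, discreteKL]
    _ ≤ discreteKL a b := by linarith

end KullbackLeibler

section Logit

variable {W K : Type*} [Fintype K] [DecidableEq W] {ω : K → W}

theorem sum_comp_mul_eq_of_fiberwise_sum_eq {R : Type*} [NonUnitalNonAssocSemiring R]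
    {a b : K → R} (h : ∀ k, ∑ j with ω j = ω k, a j = ∑ j with ω j = ω k, b j) (g : W → R) :
    ∑ k, g (ω k) * a k = ∑ k, g (ω k) * b k := by
  have hfiber (x : K → R) :
      ∑ k, g (ω k) * x k = ∑ w ∈ univ.image ω, g w * ∑ k with ω k = w, x k := by
    rw [← sum_fiberwise_of_maps_to fun k hk ↦ mem_image_of_mem ω hk]
    refine sum_congr rfl fun w _ ↦ ?_
    rw [mul_sum]
    exact sum_congr rfl fun k hk ↦ by rw [(mem_filter.1 hk).2]
  rw [hfiber, hfiber]
  refine sum_congr rfl fun w hw ↦ ?_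
  obtain ⟨k, -, rfl⟩ := mem_image.1 hw
  rw [h]

variable (ω) in
/-- The strategy set `P`: route choices `p ≥ 0` whose restriction to the routes `ω⁻¹(w)` of each
OD pair `w` is a probability vector. -/
def strategySet : Set (K → ℝ) :=
  {p | (∀ k, 0 ≤ p k) ∧ ∀ w, ∑ k with ω k = w, p k = 1}

variable (ω) in
/-- The normalizing constant of the logit choice on the routes of the OD pair `w`. -/
noncomputable def logitPartition (r : ℝ) (s : K → ℝ) (w : W) : ℝ :=
  ∑ k with ω k = w, Real.exp (-r * s k)

variable (ω) in
/-- The logit choice `q_r(s)`: on each OD pair, routes are weighted by `exp (-r s)`. -/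
noncomputable def logitChoice (r : ℝ) (s : K → ℝ) (k : K) : ℝ :=
  Real.exp (-r * s k) / logitPartition ω r s (ω k)

theorem logitPartition_pos (r : ℝ) (s : K → ℝ) (k : K) : 0 < logitPartition ω r s (ω k) :=
  sum_pos (fun _ _ ↦ Real.exp_pos _) ⟨k, by simp⟩

theorem logitChoice_pos (r : ℝ) (s : K → ℝ) (k : K) : 0 < logitChoice ω r s k :=
  div_pos (Real.exp_pos _) (logitPartition_pos r s k)

theorem sum_fiber_logitChoice (r : ℝ) (s : K → ℝ) (k : K) :
    ∑ j with ω j = ω k, logitChoice ω r s j = 1 := by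
  calc ∑ j with ω j = ω k, logitChoice ω r s j
      = ∑ j with ω j = ω k, Real.exp (-r * s j) / logitPartition ω r s (ω k) :=
        sum_congr rfl fun j hj ↦ by rw [logitChoice, (mem_filter.1 hj).2]
    _ = logitPartition ω r s (ω k) / logitPartition ω r s (ω k) := (sum_div _ _ _).symm
    _ = 1 := div_self (logitPartition_pos r s k).ne'

theorem logitChoice_mem_Ioc (r : ℝ) (s : K → ℝ) (k : K) :
    logitChoice ω r s k ∈ Set.Ioc 0 1 := by
  refine ⟨logitChoice_pos r s k, ?_⟩
  rw [← sum_fiber_logitChoice (ω := ω) r s k]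
  exact single_le_sum (fun j _ ↦ (logitChoice_pos r s j).le) (by simp)

theorem sum_logitChoice_eq_sum_logitChoice (r : ℝ) (s s' : K → ℝ) :
    ∑ k, logitChoice ω r s k = ∑ k, logitChoice ω r s' k := by
  simpa only [one_mul] using sum_comp_mul_eq_of_fiberwise_sum_eq
    (fun k ↦ (sum_fiber_logitChoice r s k).trans (sum_fiber_logitChoice r s' k).symm) fun _ ↦ 1

theorem log_logitChoice (r : ℝ) (s : K → ℝ) (k : K) :
    Real.log (logitChoice ω r s k) = -r * s k - Real.log (logitPartition ω r s (ω k)) := by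
  rw [logitChoice, Real.log_div (Real.exp_ne_zero _) (logitPartition_pos r s k).ne', Real.log_exp]

theorem half_sum_sq_sub_logitChoice_le_discreteKL (r : ℝ) (s s' : K → ℝ) :
    1 / 2 * ∑ k, (logitChoice ω r s k - logitChoice ω r s' k) ^ 2
      ≤ discreteKL (logitChoice ω r s') (logitChoice ω r s) := by
  have hkl := sum_sq_sub_div_le_discreteKL
    (fun k ↦ Set.Ioc_subset_Icc_self (logitChoice_mem_Ioc r s' k))
    (logitChoice_mem_Ioc (ω := ω) r s) (sum_logitChoice_eq_sum_logitChoice r s s').le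
  simp only [sub_sq_comm (logitChoice ω r s _)]
  linarith

theorem sum_log_logitChoice_sub_mul_sub {a b : K → ℝ}
    (hab : ∀ k, ∑ j with ω j = ω k, a j = ∑ j with ω j = ω k, b j) (r : ℝ) (s s' : K → ℝ) :
    ∑ k, (Real.log (logitChoice ω r s k) - Real.log (logitChoice ω r s' k)) * (a k - b k)
      = r * ∑ k, (s' k - s k) * (a k - b k) := by
  let g (w : W) : ℝ := Real.log (logitPartition ω r s' w) - Real.log (logitPartition ω r s w)
  have hg : ∑ k, g (ω k) * (a k - b k) = 0 := by
    simp only [mul_sub, sum_sub_distrib, sum_comp_mul_eq_of_fiberwise_sum_eq hab g, sub_self]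
  calc ∑ k, (Real.log (logitChoice ω r s k) - Real.log (logitChoice ω r s' k)) * (a k - b k)
      = ∑ k, (r * ((s' k - s k) * (a k - b k)) + g (ω k) * (a k - b k)) :=
        sum_congr rfl fun k _ ↦ by simp only [log_logitChoice, g]; ring
    _ = r * ∑ k, (s' k - s k) * (a k - b k) := by
        rw [sum_add_distrib, hg, add_zero, mul_sum]

theorem stmt_5_general {a : K → ℝ} (ha : a ∈ strategySet ω) (r η : ℝ) (s c : K → ℝ) :
    discreteKL a (logitChoice ω r (s + η • c)) ≤ discreteKL a (logitChoice ω r s)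
      - 1 / 2 * ∑ k, (logitChoice ω r s k - logitChoice ω r (s + η • c) k) ^ 2
      + r * η * ∑ k, c k * (a k - logitChoice ω r (s + η • c) k) := by
  set x := logitChoice ω r s
  set y := logitChoice ω r (s + η • c) with hy
  have hmass (k : K) : ∑ j with ω j = ω k, a j = ∑ j with ω j = ω k, y j := by
    rw [ha.2, hy, sum_fiber_logitChoice]
  calc discreteKL a y
      = discreteKL a x - discreteKL y x
          + ∑ k, (Real.log (x k) - Real.log (y k)) * (a k - y k) := discreteKL_three_point a x y
    _ = discreteKL a x - discreteKL y x + r * η * ∑ k, c k * (a k - y k) := by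
        rw [sum_log_logitChoice_sub_mul_sub hmass]
        simp only [Pi.add_apply, Pi.smul_apply, smul_eq_mul, add_sub_cancel_left, mul_assoc,
          mul_sum]
    _ ≤ discreteKL a x - 1 / 2 * ∑ k, (x k - y k) ^ 2 + r * η * ∑ k, c k * (a k - y k) := by
        gcongr
        exact half_sum_sq_sub_logitChoice_le_discreteKL r s (s + η • c)

end Logit

theorem stmt_5
    {W K E : Type*} [Fintype W] [Fintype K] [Fintype E]
    [DecidableEq W] [DecidableEq E]
    [Nonempty W] [Nonempty K]
    (ω : K → W) (hω : Function.Surjective ω)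
    (Λ : E → K → ℝ) (hΛ : ∀ e k, Λ e k = 0 ∨ Λ e k = 1)
    (d : W → ℝ) (hd : ∀ w, 0 < d w)
    (u : (E → ℝ) → (E → ℝ))
    (P : Set (K → ℝ))
    (hP : P = {p : K → ℝ | (∀ k, 0 ≤ p k) ∧
      ∀ w, ∑ k ∈ Finset.univ.filter (fun k => ω k = w), p k = 1})
    (Λbar : E → K → ℝ) (hΛbar : ∀ e k, Λbar e k = d (ω k) * Λ e k)
    (c : (K → ℝ) → K → ℝ)
    (hc : ∀ p k, c p k = ∑ e, Λ e k * u (fun e' => ∑ k', Λbar e' k' * p k') e)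
    (q : ℝ → (K → ℝ) → K → ℝ)
    (hq : ∀ (rr : ℝ) (ss : K → ℝ) (k : K),
      q rr ss k = Real.exp (-rr * ss k) /
        ∑ k' ∈ Finset.univ.filter (fun k' => ω k' = ω k), Real.exp (-rr * ss k'))
    (Pstar : Set (K → ℝ))
    (hPstar : Pstar = {ps ∈ P | ∀ pp ∈ P, 0 ≤ ∑ k, c ps k * (pp k - ps k)})
    (D : (K → ℝ) → (K → ℝ) → ℝ)
    (hD : ∀ a b, D a b = ∑ k, a k * (Real.log (a k) - Real.log (b k)))
    (r : ℝ) (hr : 0 < r)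
    (η : ℕ → ℝ) (hη : ∀ t, 0 < η t)
    (s : ℕ → K → ℝ) (p : ℕ → K → ℝ)
    (hp : ∀ t, p t = q r (s t))
    (hs : ∀ t, s (t + 1) = fun k => s t k + η t * c (p t) k)
 :
    ∀ pstar ∈ Pstar, ∀ t : ℕ,
      D pstar (p (t + 1)) ≤ D pstar (p t)
        - (1 / 2) * (∑ k, (p t k - p (t + 1) k) ^ 2)
        + r * η t * ∑ k, c (p t) k * (pstar k - p (t + 1) k) := by
  obtain rfl : q = logitChoice ω := funext₃ hq
  obtain rfl : D = discreteKL := funext₂ hD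
  subst hP hPstar
  intro pstar hpstar t
  rw [hp (t + 1), show s (t + 1) = s t + η t • c (p t) from hs t, hp t]
  exact stmt_5_general hpstar.1 r (η t) (s t) _
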